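/- Let G be an (n−k)-regular bipartite false twin-free graph on 2n vertices with bipartition A ∪ B and γ_t(G) = γ_gr^t(G) = 6, let a_1 ≠ a_2 be vertices of A, and set B_2 = N(a_1)\N(a_2), B_1 = N(a_2)\N(a_1), B' = N(a_1) ∩ N(a_2), and A' = {a ∈ A\{a_1,a_2} : N(a) ⊆ B_1 ∪ B_2 ∪ B'}. Then every vertex b ∈ B_1 ∪ B_2 ∪ B' has exactly one non-neighbor in {a_1, a_2} ∪ A'. -/

import Mathlib

/-- `S` is a total dominating set of `G`: every vertex has a neighbor in `S`. -/
def IsTotalDomSet {V : Type*} (G : SimpleGraph V) (S : Set V) : Prop :=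
  ∀ v : V, ∃ u ∈ S, G.Adj v u

/-- `l` is a legal sequence of `G`: the vertices are distinct and every vertex
(except possibly the first) totally dominates a vertex not totally dominated
by the previous vertices. -/
def IsLegalSeq {V : Type*} (G : SimpleGraph V) (l : List V) : Prop :=
  l.Nodup ∧ ∀ i : Fin l.length, 0 < (i : ℕ) →
    ∃ w : V, G.Adj (l.get i) w ∧ ∀ j : Fin l.length, (j : ℕ) < (i : ℕ) → ¬ G.Adj (l.get j) w

/-- `l` is a total dominating sequence of `G`. -/
def IsTotalDomSeq {V : Type*} (G : SimpleGraph V) (l : List V) : Prop :=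
  IsLegalSeq G l ∧ IsTotalDomSet G {v | v ∈ l}

/-- The Grundy total domination number of `G`: the maximum length of a total
dominating sequence. -/
noncomputable def grundyTotalDomNum {V : Type*} (G : SimpleGraph V) : ℕ :=
  sSup {k : ℕ | ∃ l : List V, IsTotalDomSeq G l ∧ l.length = k}

/-- The total domination number of `G`: the minimum cardinality of a total
dominating set. -/
noncomputable def totalDomNum {V : Type*} (G : SimpleGraph V) : ℕ :=
  sInf {k : ℕ | ∃ S : Set V, IsTotalDomSet G S ∧ S.ncard = k}

/-- `A`, `B` is a bipartition of `G`. -/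
def IsBipartitionOf {V : Type*} (G : SimpleGraph V) (A B : Set V) : Prop :=
  (∀ v : V, (v ∈ A ∧ v ∉ B) ∨ (v ∈ B ∧ v ∉ A)) ∧
  ∀ ⦃u v : V⦄, G.Adj u v → (u ∈ A ∧ v ∈ B) ∨ (u ∈ B ∧ v ∈ A)

/-- `G` has no false twins: distinct vertices have distinct open neighborhoods. -/
def FalseTwinFree {V : Type*} (G : SimpleGraph V) : Prop :=
  ∀ u v : V, u ≠ v → G.neighborSet u ≠ G.neighborSet v

/-- `G` has no isolated vertices. -/
def NoIsolatedVerts {V : Type*} (G : SimpleGraph V) : Prop :=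
  ∀ v : V, ∃ u : V, G.Adj v u

/-!
Split legal sequences and dominating sets of a bipartite graph by side. A legal sequence on one
side, read backwards with vertices and footprints exchanged, is one on the other side, so it has at
most `γ_gr^t / 2` vertices; if `γ_t = γ_gr^t`, then conversely at least `γ_t / 2` vertices are
needed to dominate one side. Neighborhoods are therefore pairwise incomparable, and when
`γ_t = γ_gr^t = 6` two vertices on one side have exactly one common non-neighbor on the other: two
vertices do not dominate that side, and two common non-neighbors would be footprints continuing a
legal sequence to length four. If `w` is the common non-neighbor of `a₁` and `a₂`, then
`{a₁, a₂} ∪ A'` is the set of non-neighbors of `w` in `A`, so the non-neighbors of `b` in it are the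
common non-neighbors of `w` and `b`.
-/

open SimpleGraph

/-- Every vertex of `T` has a neighbor in `S`: total domination relative to a target set, which in
a bipartite graph allows the two sides to be dominated separately. -/
def TotallyDominates {V : Type*} (G : SimpleGraph V) (S T : Set V) : Prop :=
  ∀ v ∈ T, ∃ u ∈ S, G.Adj v u

/-- A legal sequence together with a choice of footprints: the dart `d` stands for the vertex
`d.fst` with footprint `d.snd`, a neighbor of `d.fst` but of none of the vertices before it. -/
def IsFootprintSeq {V : Type*} {G : SimpleGraph V} (l : List G.Dart) : Prop :=
  l.Pairwise fun d e => ¬ G.Adj d.fst e.snd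

section

variable {V : Type*} {G : SimpleGraph V} {A B S T : Set V}

theorem IsBipartitionOf.isBipartiteWith (h : IsBipartitionOf G A B) : G.IsBipartiteWith A B where
  disjoint := Set.disjoint_left.2 fun v hA hB => (h.1 v).elim (·.2 hB) (·.2 hA)
  mem_of_adj := h.2

theorem totalDomNum_le_ncard (hS : IsTotalDomSet G S) : totalDomNum G ≤ S.ncard :=
  Nat.sInf_le ⟨S, hS, rfl⟩

theorem noIsolatedVerts_of_totalDomNum_pos (h : 0 < totalDomNum G) : NoIsolatedVerts G := by
  obtain ⟨_, S, hS, _⟩ := Nat.nonempty_of_pos_sInf h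
  intro v
  obtain ⟨u, -, hvu⟩ := hS v
  exact ⟨u, hvu⟩

theorem TotallyDominates.isTotalDomSet_union (hAB : G.IsBipartiteWith A B)
    (hG : NoIsolatedVerts G) (hS : TotallyDominates G S B) (hT : TotallyDominates G T A) :
    IsTotalDomSet G (S ∪ T) := by
  intro v
  obtain ⟨u, hvu⟩ := hG v
  rcases hAB.mem_of_adj hvu with ⟨hv, -⟩ | ⟨hv, -⟩
  · obtain ⟨t, ht, hvt⟩ := hT v hv
    exact ⟨t, Or.inr ht, hvt⟩
  · obtain ⟨s, hs, hvs⟩ := hS v hv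
    exact ⟨s, Or.inl hs, hvs⟩

theorem ncard_mem_list_le_length {α : Type*} (l : List α) : {a | a ∈ l}.ncard ≤ l.length := by
  classical
  rw [← List.coe_toFinset, Set.ncard_coe_finset]
  exact l.toFinset_card_le

namespace IsFootprintSeq

variable {l : List G.Dart}

theorem nodup_map_fst (hl : IsFootprintSeq l) : (l.map (·.fst)).Nodup := by
  rw [List.Nodup, List.pairwise_map]
  refine hl.imp fun {d e} hde (heq : d.fst = e.fst) => hde ?_
  rw [heq]
  exact e.adj

theorem isLegalSeq (hl : IsFootprintSeq l) : IsLegalSeq G (l.map (·.fst)) := by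
  refine ⟨hl.nodup_map_fst, fun ⟨i, hi⟩ _ => ?_⟩
  rw [List.length_map] at hi
  refine ⟨l[i].snd, ?_, fun ⟨j, _⟩ hji => ?_⟩
  · simp
  · simpa using List.pairwise_iff_getElem.1 hl j i (hji.trans hi) hi hji

theorem reverse_map_symm (hl : IsFootprintSeq l) :
    IsFootprintSeq (l.reverse.map Dart.symm) := by
  rw [IsFootprintSeq, List.pairwise_map, List.pairwise_reverse]
  exact hl.imp fun hde hed => hde hed.symm

theorem append_singleton (hl : IsFootprintSeq l) {d : G.Dart}
    (hd : ∀ e ∈ l, ¬ G.Adj e.fst d.snd) : IsFootprintSeq (l ++ [d]) :=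
  List.pairwise_append.2 ⟨hl, List.pairwise_singleton _ _, by simpa using hd⟩

theorem append_reverse_map_symm (hAB : G.IsBipartiteWith A B) (hl : IsFootprintSeq l)
    (hlB : ∀ d ∈ l, d.snd ∈ B) : IsFootprintSeq (l ++ l.reverse.map Dart.symm) := by
  have hlA : ∀ d ∈ l, d.fst ∈ A := fun d hd => hAB.symm.mem_of_mem_adj (hlB d hd) d.adj.symm
  refine List.pairwise_append.2 ⟨hl, hl.reverse_map_symm, fun d hd e' he' hadj => ?_⟩
  obtain ⟨e, he, rfl⟩ := List.mem_map.1 he'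
  have heB : e.fst ∈ B := hAB.mem_of_mem_adj (hlA d hd) hadj
  exact hAB.disjoint.notMem_of_mem_left (hlA e (List.mem_reverse.1 he)) heB

variable [Finite V]

theorem length_le_natCard (hl : IsFootprintSeq l) : l.length ≤ Nat.card V := by
  simpa using hl.nodup_map_fst.length_le_natCard

theorem length_le_grundyTotalDomNum (hl : IsFootprintSeq l)
    (hdom : IsTotalDomSet G {v | v ∈ l.map (·.fst)}) : l.length ≤ grundyTotalDomNum G := by
  refine le_csSup ⟨Nat.card V, ?_⟩ ⟨_, ⟨hl.isLegalSeq, hdom⟩, List.length_map _⟩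
  rintro _ ⟨s, hs, rfl⟩
  exact hs.1.1.length_le_natCard

theorem exists_prefix_totallyDominates (hG : NoIsolatedVerts G) (hl : IsFootprintSeq l)
    (hlT : ∀ d ∈ l, d.snd ∈ T) :
    ∃ l', l <+: l' ∧ IsFootprintSeq l' ∧ (∀ d ∈ l', d.snd ∈ T) ∧
      TotallyDominates G {v | v ∈ l'.map (·.fst)} T := by
  induction hm : Nat.card V - l.length using Nat.strong_induction_on generalizing l with
  | _ m ih =>
    by_cases hdom : TotallyDominates G {v | v ∈ l.map (·.fst)} T
    · exact ⟨l, List.prefix_rfl, hl, hlT, hdom⟩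
    · simp only [TotallyDominates, not_forall] at hdom
      obtain ⟨v, hvT, hv⟩ := hdom
      obtain ⟨u, hvu⟩ := hG v
      let d : G.Dart := ⟨(u, v), hvu.symm⟩
      have hld : IsFootprintSeq (l ++ [d]) := hl.append_singleton fun e he hev =>
        hv ⟨e.fst, List.mem_map_of_mem (f := (·.fst)) he, hev.symm⟩
      have hldT : ∀ e ∈ l ++ [d], e.snd ∈ T :=
        List.forall_mem_append.2 ⟨hlT, List.forall_mem_singleton.2 hvT⟩
      have hdecr : Nat.card V - (l ++ [d]).length < m := by
        have hlen := hld.length_le_natCard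
        rw [List.length_append, List.length_singleton] at hlen ⊢
        omega
      obtain ⟨l', hpre, hl'⟩ := ih _ hdecr hld hldT rfl
      exact ⟨l', (List.prefix_append _ _).trans hpre, hl'⟩

theorem two_mul_length_le_grundyTotalDomNum (hG : NoIsolatedVerts G)
    (hAB : G.IsBipartiteWith A B) (hl : IsFootprintSeq l) (hlB : ∀ d ∈ l, d.snd ∈ B) :
    2 * l.length ≤ grundyTotalDomNum G := by
  obtain ⟨l', hpre, hl', -, hdom⟩ :=
    (hl.append_reverse_map_symm hAB hlB).exists_prefix_totallyDominates (T := Set.univ) hG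
      fun _ _ => Set.mem_univ _
  calc 2 * l.length = (l ++ l.reverse.map Dart.symm).length := by simp [two_mul]
    _ ≤ l'.length := hpre.length_le
    _ ≤ grundyTotalDomNum G := hl'.length_le_grundyTotalDomNum fun v => hdom v (Set.mem_univ v)

end IsFootprintSeq

section

variable [Finite V]

theorem totalDomNum_le_two_mul_ncard (hG : NoIsolatedVerts G) (hAB : G.IsBipartiteWith A B)
    (hγ : grundyTotalDomNum G ≤ totalDomNum G) (hS : TotallyDominates G S B) :
    totalDomNum G ≤ 2 * S.ncard := by
  obtain ⟨l, -, hl, hlA, hdom⟩ := IsFootprintSeq.exists_prefix_totallyDominates hG (l := [])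
    (T := A) List.Pairwise.nil (List.forall_mem_nil _)
  have hlong : 2 * l.length ≤ grundyTotalDomNum G :=
    hl.two_mul_length_le_grundyTotalDomNum hG hAB.symm hlA
  have hshort : totalDomNum G ≤ S.ncard + l.length :=
    calc totalDomNum G ≤ (S ∪ {v | v ∈ l.map (·.fst)}).ncard :=
          totalDomNum_le_ncard (hS.isTotalDomSet_union hAB hG hdom)
      _ ≤ S.ncard + {v | v ∈ l.map (·.fst)}.ncard := Set.ncard_union_le _ _
      _ ≤ S.ncard + l.length := by simpa using ncard_mem_list_le_length (l.map (·.fst))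
  omega

-- If `N(u) ⊆ N(v)`, then a maximal legal sequence starting with `u, v` still dominates the other
-- side after its first vertex `u` is dropped.
theorem exists_adj_not_adj_of_grundyTotalDomNum_le (hG : NoIsolatedVerts G)
    (hAB : G.IsBipartiteWith A B) (hγ : grundyTotalDomNum G ≤ totalDomNum G)
    (hftf : FalseTwinFree G) {u v : V} (hu : u ∈ A) (hv : v ∈ A) (huv : u ≠ v) :
    ∃ w, G.Adj u w ∧ ¬ G.Adj v w := by
  by_contra! hsub
  obtain ⟨c, huc⟩ := hG u
  obtain ⟨e, hve, hue⟩ : ∃ e, G.Adj v e ∧ ¬ G.Adj u e := by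
    by_contra! hsup
    exact hftf u v huv (Set.Subset.antisymm hsub hsup)
  let du : G.Dart := ⟨(u, c), huc⟩
  let dv : G.Dart := ⟨(v, e), hve⟩
  have hstart : IsFootprintSeq [du, dv] := List.pairwise_pair.2 hue
  have hstartB : ∀ d ∈ [du, dv], d.snd ∈ B := by
    simp [du, dv, hAB.mem_of_mem_adj hu huc, hAB.mem_of_mem_adj hv hve]
  obtain ⟨_, ⟨l, rfl⟩, hl, hlB, hdom⟩ := hstart.exists_prefix_totallyDominates hG hstartB
  have hdom' : TotallyDominates G {x | x ∈ (dv :: l).map (·.fst)} B := by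
    intro z hz
    obtain ⟨x, hx, hzx⟩ := hdom z hz
    rcases List.mem_cons.1 hx with rfl | hx
    · exact ⟨v, List.mem_cons_self, (hsub z hzx.symm).symm⟩
    · exact ⟨x, hx, hzx⟩
  have hlong : 2 * (l.length + 2) ≤ grundyTotalDomNum G :=
    hl.two_mul_length_le_grundyTotalDomNum hG hAB hlB
  have hshort : totalDomNum G ≤ 2 * (l.length + 1) := by
    grw [totalDomNum_le_two_mul_ncard hG hAB hγ hdom', ncard_mem_list_le_length]
    simp
  omega

theorem exists_common_nonneighbor (hG : NoIsolatedVerts G) (hAB : G.IsBipartiteWith A B)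
    (hγ : grundyTotalDomNum G ≤ totalDomNum G) (ht : 4 < totalDomNum G) (x y : V) :
    ∃ z ∈ B, ¬ G.Adj x z ∧ ¬ G.Adj y z := by
  by_contra! hcov
  have hdom : TotallyDominates G {x, y} B := fun z hz => by
    by_cases hxz : G.Adj x z
    · exact ⟨x, Or.inl rfl, hxz.symm⟩
    · exact ⟨y, Or.inr rfl, (hcov z hz hxz).symm⟩
  have hle : totalDomNum G ≤ 2 * ({x, y} : Set V).ncard :=
    totalDomNum_le_two_mul_ncard hG hAB hγ hdom
  have hpair : ({x, y} : Set V).ncard ≤ 2 := by grw [Set.ncard_insert_le, Set.ncard_singleton]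
  omega

theorem common_nonneighbor_unique (hG : NoIsolatedVerts G) (hAB : G.IsBipartiteWith A B)
    (hγ : grundyTotalDomNum G ≤ totalDomNum G) (hg : grundyTotalDomNum G < 8)
    (hftf : FalseTwinFree G) {x y z z' : V} (hx : x ∈ A) (hy : y ∈ A) (hxy : x ≠ y)
    (hz : z ∈ B) (hxz : ¬ G.Adj x z) (hyz : ¬ G.Adj y z)
    (hz' : z' ∈ B) (hxz' : ¬ G.Adj x z') (hyz' : ¬ G.Adj y z') : z = z' := by
  by_contra hzz'
  obtain ⟨c, hxc⟩ := hG x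
  obtain ⟨e, hye, hxe⟩ :=
    exists_adj_not_adj_of_grundyTotalDomNum_le hG hAB hγ hftf hy hx hxy.symm
  obtain ⟨s, hzs, hz's⟩ :=
    exists_adj_not_adj_of_grundyTotalDomNum_le hG hAB.symm hγ hftf hz hz' hzz'
  obtain ⟨t, hz't⟩ := hG z'
  let l : List G.Dart := [⟨(x, c), hxc⟩, ⟨(y, e), hye⟩, ⟨(s, z), hzs.symm⟩, ⟨(t, z'), hz't.symm⟩]
  have hl : IsFootprintSeq l := by
    simp [l, IsFootprintSeq, hxe, hxz, hxz', hyz, hyz', G.adj_comm s z', hz's]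
  have hlB : ∀ d ∈ l, d.snd ∈ B := by
    simp [l, hAB.mem_of_mem_adj hx hxc, hAB.mem_of_mem_adj hy hye, hz, hz']
  have hlong : 2 * 4 ≤ grundyTotalDomNum G :=
    hl.two_mul_length_le_grundyTotalDomNum hG hAB hlB
  omega

theorem existsUnique_common_nonneighbor (hAB : G.IsBipartiteWith A B) (hftf : FalseTwinFree G)
    (ht : totalDomNum G = 6) (hg : grundyTotalDomNum G = 6) {x y : V} (hx : x ∈ A) (hy : y ∈ A)
    (hxy : x ≠ y) : ∃! z, z ∈ B ∧ ¬ G.Adj x z ∧ ¬ G.Adj y z := by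
  have hG : NoIsolatedVerts G := noIsolatedVerts_of_totalDomNum_pos (by omega)
  have hγ : grundyTotalDomNum G ≤ totalDomNum G := by omega
  obtain ⟨z, hz, hxz, hyz⟩ := exists_common_nonneighbor hG hAB hγ (by omega) x y
  exact ⟨z, ⟨hz, hxz, hyz⟩, fun z' ⟨hz', hxz', hyz'⟩ =>
    common_nonneighbor_unique hG hAB hγ (by omega) hftf hx hy hxy hz' hxz' hyz' hz hxz hyz⟩

end

theorem neighborSet_subset_union_iff_not_adj (hAB : G.IsBipartiteWith A B) {a a₁ a₂ w : V}
    (ha : a ∈ A) (hw₁ : ¬ G.Adj a₁ w) (hw₂ : ¬ G.Adj a₂ w)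
    (hw : ∀ z, z ∈ B ∧ ¬ G.Adj a₁ z ∧ ¬ G.Adj a₂ z → z = w) :
    G.neighborSet a ⊆ G.neighborSet a₁ ∪ G.neighborSet a₂ ↔ ¬ G.Adj a w := by
  refine ⟨fun hsub haw => (hsub haw).elim hw₁ hw₂, fun haw c hac => ?_⟩
  by_contra hc
  obtain rfl : c = w := hw c ⟨hAB.mem_of_mem_adj ha hac, not_or.1 hc⟩
  exact haw hac

theorem pair_union_sep_neighborSet_subset_union {a₁ a₂ : V} (ha₁ : a₁ ∈ A) (ha₂ : a₂ ∈ A) :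
    ({a₁, a₂} : Set V) ∪
        {a ∈ A \ {a₁, a₂} | G.neighborSet a ⊆ G.neighborSet a₁ ∪ G.neighborSet a₂} =
      {a ∈ A | G.neighborSet a ⊆ G.neighborSet a₁ ∪ G.neighborSet a₂} := by
  ext a
  by_cases ha : a ∈ ({a₁, a₂} : Set V)
  · rcases ha with rfl | rfl <;> simp [*]
  · simp only [Set.mem_union, Set.mem_ofPred_eq, Set.mem_sdiff, ha, not_false_eq_true, and_true,
      false_or]

theorem claim_unique_nonneighbor_general [Finite V] (hbip : IsBipartitionOf G A B)
    (hftf : FalseTwinFree G) (ht : totalDomNum G = 6) (hg : grundyTotalDomNum G = 6)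
    {a₁ a₂ : V} (ha₁ : a₁ ∈ A) (ha₂ : a₂ ∈ A) (hne : a₁ ≠ a₂) {B₁ B₂ B' A' : Set V}
    (hB₂ : B₂ = G.neighborSet a₁ \ G.neighborSet a₂)
    (hB₁ : B₁ = G.neighborSet a₂ \ G.neighborSet a₁)
    (hB' : B' = G.neighborSet a₁ ∩ G.neighborSet a₂)
    (hA' : A' = {a ∈ A \ {a₁, a₂} | G.neighborSet a ⊆ B₁ ∪ B₂ ∪ B'})
    {b : V} (hb : b ∈ B₁ ∪ B₂ ∪ B') :
    ∃! a : V, a ∈ ({a₁, a₂} : Set V) ∪ A' ∧ ¬ G.Adj a b := by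
  have hAB := hbip.isBipartiteWith
  have hN : B₁ ∪ B₂ ∪ B' = G.neighborSet a₁ ∪ G.neighborSet a₂ := by
    rw [hB₁, hB₂, hB', Set.inter_comm, Set.union_comm (G.neighborSet a₁)]
    exact symmDiff_sup_inf _ _
  rw [hN] at hA' hb
  rw [hA', pair_union_sep_neighborSet_subset_union ha₁ ha₂]
  obtain ⟨w, ⟨hwB, hw₁, hw₂⟩, hw⟩ := existsUnique_common_nonneighbor hAB hftf ht hg ha₁ ha₂ hne
  have hbB : b ∈ B := hb.elim (hAB.mem_of_mem_adj ha₁) (hAB.mem_of_mem_adj ha₂)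
  have hwb : w ≠ b := by
    rintro rfl
    exact hb.elim hw₁ hw₂
  refine (existsUnique_congr fun a => ?_).1
    (existsUnique_common_nonneighbor hAB.symm hftf ht hg hwB hbB hwb)
  rw [Set.mem_sep_iff, and_assoc, G.adj_comm w, G.adj_comm b]
  exact and_congr_right fun ha => and_congr_left' <|
    (neighborSet_subset_union_iff_not_adj hAB ha hw₁ hw₂ hw).symm

end

/-- Every vertex `b ∈ B₁ ∪ B₂ ∪ B'` has exactly one non-neighbor
in `{a₁, a₂} ∪ A'`. -/
theorem claim_unique_nonneighbor
    {V : Type*} [Fintype V] (G : SimpleGraph V) (n k : ℕ) (A B : Set V)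
    (hbip : IsBipartitionOf G A B) (hftf : FalseTwinFree G)
    (hcard : Fintype.card V = 2 * n)
    (hreg : ∀ v : V, (G.neighborSet v).ncard = n - k)
    (ht : totalDomNum G = 6) (hg : grundyTotalDomNum G = 6)
    (a₁ a₂ : V) (ha₁ : a₁ ∈ A) (ha₂ : a₂ ∈ A) (hne : a₁ ≠ a₂)
    (B₁ B₂ B' A' : Set V)
    (hB₂ : B₂ = G.neighborSet a₁ \ G.neighborSet a₂)
    (hB₁ : B₁ = G.neighborSet a₂ \ G.neighborSet a₁)
    (hB' : B' = G.neighborSet a₁ ∩ G.neighborSet a₂)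
    (hA' : A' = {a ∈ A \ {a₁, a₂} | G.neighborSet a ⊆ B₁ ∪ B₂ ∪ B'})
    (b : V) (hb : b ∈ B₁ ∪ B₂ ∪ B') :
    ∃! a : V, a ∈ ({a₁, a₂} : Set V) ∪ A' ∧ ¬ G.Adj a b :=
  claim_unique_nonneighbor_general hbip hftf ht hg ha₁ ha₂ hne hB₂ hB₁ hB' hA' hb
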